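/- Let s = (s_1,…,s_m) be a scoring vector, let the n agents' rankings be independent and uniformly distributed over all m! rankings of {1,…,m} (the FI model), and let k = (k_1,…,k_n) be a vector of nonnegative integers summing to m. Then for each agent i, the expected utility of agent i under the non-interleaving picking sequence k equals the average, over all c_i-element subsets S of {1,…,m}, of the sum of s_r over the k_i smallest elements r of {1,…,m} \ S, where c_i = k_1 + … + k_{i-1}. In particular, this expected utility depends only on k_i and c_i. -/

import Mathlib

/-- The `k` most preferred items of `S` under the ranking `σ` (where `σ r` is the item of
0-based rank `r`, so `σ.symm x` is the rank of item `x`): the items of `S` having fewer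
than `k` strictly better items inside `S`. -/
def topk {m : ℕ} (σ : Fin m ≃ Fin m) (S : Finset (Fin m)) (k : ℕ) : Finset (Fin m) :=
  S.filter fun x => (S.filter fun y => σ.symm y < σ.symm x).card < k

/-- Items remaining before the `i`-th agent (0-based) picks, under profile `P` (agent `i`
has ranking `P i`) and pick-count vector `k` (agent `i` picks `k i` items). -/
def remaining {m : ℕ} (P : ℕ → Fin m ≃ Fin m) (k : ℕ → ℕ) : ℕ → Finset (Fin m)
  | 0 => Finset.univ
  | i + 1 => remaining P k i \ topk (P i) (remaining P k i) (k i)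

/-- The set of items greedily picked by the `i`-th agent (0-based). -/
def alloc {m : ℕ} (P : ℕ → Fin m ≃ Fin m) (k : ℕ → ℕ) (i : ℕ) : Finset (Fin m) :=
  topk (P i) (remaining P k i) (k i)

/-- The utility of the `i`-th agent (0-based): the sum of the scores `s r` over the
1-based ranks `r` (in her own ranking) of the items she receives. -/
noncomputable def util {m : ℕ} (s : ℕ → ℝ) (P : ℕ → Fin m ≃ Fin m) (k : ℕ → ℕ)
    (i : ℕ) : ℝ :=
  ∑ x ∈ alloc P k i, s (((P i).symm x : ℕ) + 1)

/-- The `k` smallest elements of a finite set `A` of naturals: the elements of `A` having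
fewer than `k` strictly smaller elements inside `A`. -/
def smallestK (A : Finset ℕ) (k : ℕ) : Finset ℕ :=
  A.filter fun x => (A.filter fun y => y < x).card < k

/-- `g m s j k t` is the average, over all `t`-element subsets `S` of `{j,…,m}`, of the sum
of `s r` over the `k` smallest elements `r` of `{j,…,m} \ S`. -/
noncomputable def g (m : ℕ) (s : ℕ → ℝ) (j k t : ℕ) : ℝ :=
  (∑ S ∈ (Finset.Icc j m).powersetCard t,
      ∑ r ∈ smallestK (Finset.Icc j m \ S) k, s r) /
    (((Finset.Icc j m).powersetCard t).card : ℝ)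

/-- Extend a profile on `Fin n` to a profile indexed by `ℕ` (agents `≥ n` are irrelevant). -/
def extendProfile {m : ℕ} (n : ℕ) (Q : Fin n → Fin m ≃ Fin m) : ℕ → Fin m ≃ Fin m :=
  fun i => if h : i < n then Q ⟨i, h⟩ else Equiv.refl _

/-- Expected utility of the `i`-th agent (0-based) in the full independence model: the
average, over all `(m!)^n` equally likely profiles, of her utility under the
non-interleaving picking sequence `k`. -/
noncomputable def EUFI (n m : ℕ) (s : ℕ → ℝ) (k : ℕ → ℕ) (i : ℕ) : ℝ :=
  (∑ Q : Fin n → Fin m ≃ Fin m, util s (extendProfile n Q) k i) /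
    (Fintype.card (Fin n → Fin m ≃ Fin m) : ℝ)

/-!
Only the ranking of agent `i` matters once the items left to her are known, and those are fixed by
the rankings of the earlier agents. Condition on all other rankings: the set of `c_i` items already
taken is then a fixed set, and its set of ranks under the uniform ranking of agent `i` is a uniform
`c_i`-element subset `S` of `{1,…,m}`, because permutations act transitively on subsets of a given
size. She receives the items whose ranks are the `k_i` smallest outside `S`.
-/

open Finset
open scoped BigOperators

section Averages

variable {M : Type*} [AddCommMonoid M] [Module ℚ≥0 M]

theorem expect_expect_update {ι : Type*} [Fintype ι] [DecidableEq ι] {π : ι → Type*}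
    [∀ j, Fintype (π j)] (i : ι) (f : (∀ j, π j) → M) :
    𝔼 Q, 𝔼 a, f (Function.update Q i a) = 𝔼 Q, f Q := by
  -- Exchanging `Q i` with an independent copy `a` is an involution of the pairs `(Q, a)`.
  let exchange : (∀ j, π j) × π i → (∀ j, π j) × π i :=
    fun p => (Function.update p.1 i p.2, p.1 i)
  have hexchange : ∀ p, exchange (exchange p) = p := fun p => by simp [exchange]
  calc 𝔼 Q, 𝔼 a, f (Function.update Q i a)
      = 𝔼 p : (∀ j, π j) × π i, f (exchange p).1 :=
        (expect_product' _ _ fun Q a => f (Function.update Q i a)).symm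
    _ = 𝔼 p : (∀ j, π j) × π i, f p.1 :=
        Fintype.expect_equiv (Function.Involutive.toPerm exchange hexchange) _ _ fun _ => rfl
    _ = 𝔼 Q, 𝔼 _a : π i, f Q := expect_product' _ _ fun Q _ => f Q
    _ = 𝔼 Q, f Q := expect_congr rfl fun Q _ =>
        have : Nonempty (π i) := ⟨Q i⟩
        Fintype.expect_const (f Q)

theorem expect_smul_of_isPretransitive {G X : Type*} [Group G] [Fintype G] [Fintype X]
    [MulAction G X] [MulAction.IsPretransitive G X] (f : X → M) (x : X) :
    𝔼 g : G, f (g • x) = 𝔼 y, f y := by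
  have hbase (y : X) : 𝔼 g : G, f (g • y) = 𝔼 g : G, f (g • x) := by
    obtain ⟨h, rfl⟩ := MulAction.exists_smul_eq G x y
    exact Fintype.expect_equiv (Equiv.mulRight h) _ _ fun g => by simp [mul_smul]
  calc 𝔼 g : G, f (g • x)
      = 𝔼 y : X, 𝔼 g : G, f (g • y) := by
        have : Nonempty X := ⟨x⟩
        rw [expect_congr rfl fun y _ => hbase y, Fintype.expect_const]
    _ = 𝔼 g : G, 𝔼 y : X, f (g • y) := expect_comm _ _ _
    _ = 𝔼 _g : G, 𝔼 y, f y :=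
        expect_congr rfl fun g _ => Fintype.expect_equiv (MulAction.toPerm g) _ _ fun _ => rfl
    _ = 𝔼 y, f y := Fintype.expect_const _

theorem expect_powersetCard_map {α β : Type*} (e : α ↪ β) (A : Finset α) (c : ℕ)
    (H : Finset β → M) :
    𝔼 S ∈ (A.map e).powersetCard c, H S = 𝔼 S ∈ A.powersetCard c, H (S.map e) := by
  rw [powersetCard_map, expect, expect, sum_map, card_map]
  rfl

theorem expect_map_perm {α : Type*} [Fintype α] [DecidableEq α] (H : Finset α → M)
    (T : Finset α) :
    𝔼 σ : Equiv.Perm α, H (T.map σ.toEmbedding) = 𝔼 S ∈ univ.powersetCard #T, H S := by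
  have := Set.powersetCard.isPretransitive (α := α) (n := #T)
  calc 𝔼 σ : Equiv.Perm α, H (T.map σ.toEmbedding)
      = 𝔼 σ : Equiv.Perm α, H ↑(σ • Set.powersetCard.ofCard (rfl : #T = #T)) :=
        expect_congr rfl fun σ _ => by
          rw [Set.powersetCard.coe_smul, map_eq_image]
          rfl
    _ = 𝔼 S : Set.powersetCard α #T, H S :=
        expect_smul_of_isPretransitive (fun S : Set.powersetCard α #T => H S) _
    _ = 𝔼 S ∈ univ.powersetCard #T, H S :=
        expect_nbij (fun S => (S : Finset α)) (fun S _ => by simp [mem_powersetCard])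
          (fun _ _ => rfl) Subtype.val_injective.injOn
          fun S hS => ⟨⟨S, (mem_powersetCard.1 hS).2⟩, by simp, rfl⟩

end Averages

section RankIn

variable {α β : Type*}

section Preorder

variable [Preorder β] [DecidableLT β]

/-- The 0-based rank of `x` within `S` when elements are compared by their `f`-values. Both `topk`
and `smallestK` select the elements of rank less than `k`. -/
def rankIn (f : α → β) (S : Finset α) (x : α) : ℕ := #{y ∈ S | f y < f x}

theorem rankIn_lt_rankIn {f : α → β} {S : Finset α} {x y : α} (hx : x ∈ S) (hxy : f x < f y) :
    rankIn f S x < rankIn f S y :=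
  card_lt_card <| (ssubset_iff_of_subset
    (monotone_filter_right S fun _ _ h => h.trans hxy)).2 ⟨x, by simp [hx, hxy], by simp⟩

theorem rankIn_lt_card (f : α → β) {S : Finset α} {x : α} (hx : x ∈ S) : rankIn f S x < #S :=
  card_lt_card <| filter_ssubset.2 ⟨x, hx, lt_irrefl _⟩

end Preorder

variable [LinearOrder β]

theorem injOn_rankIn {f : α → β} {S : Finset α} (hf : Set.InjOn f S) :
    Set.InjOn (rankIn f S) S := fun x hx y hy h => by
  by_contra hne
  rcases (hf.ne hx hy hne).lt_or_gt with hlt | hlt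
  · exact (rankIn_lt_rankIn hx hlt).ne h
  · exact (rankIn_lt_rankIn hy hlt).ne' h

theorem image_rankIn {f : α → β} {S : Finset α} (hf : Set.InjOn f S) :
    S.image (rankIn f S) = range #S :=
  eq_of_subset_of_card_le
    (image_subset_iff.2 fun _ hx => mem_range.2 (rankIn_lt_card f hx))
    (by rw [card_range, card_image_of_injOn (injOn_rankIn hf)])

theorem card_filter_rankIn_lt {f : α → β} {S : Finset α} (hf : Set.InjOn f S) (k : ℕ) :
    #{x ∈ S | rankIn f S x < k} = min k #S := by
  have hinj := (injOn_rankIn hf).mono (filter_subset (fun x => rankIn f S x < k) S)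
  calc #{x ∈ S | rankIn f S x < k}
      = #{j ∈ S.image (rankIn f S) | j < k} := by rw [filter_image, card_image_of_injOn hinj]
    _ = #(range (min k #S)) := by
        rw [image_rankIn hf]
        congr 1
        ext j
        simp [and_comm]
    _ = min k #S := card_range _

end RankIn

section Picking

variable {m : ℕ}

theorem card_topk (σ : Fin m ≃ Fin m) (S : Finset (Fin m)) (k : ℕ) :
    #(topk σ S k) = min k #S :=
  card_filter_rankIn_lt σ.symm.injective.injOn k

theorem card_remaining (P : ℕ → Fin m ≃ Fin m) (k : ℕ → ℕ) (i : ℕ) :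
    #(remaining P k i) = m - ∑ j ∈ range i, k j := by
  induction i with
  | zero => simp [remaining]
  | succ i ih =>
    have hsub : topk (P i) (remaining P k i) (k i) ⊆ remaining P k i := filter_subset _ _
    rw [remaining, card_sdiff_of_subset hsub, card_topk, ih, sum_range_succ]
    omega

theorem card_compl_remaining (P : ℕ → Fin m ≃ Fin m) {k : ℕ → ℕ} {i : ℕ}
    (hk : ∑ j ∈ range i, k j ≤ m) : #(remaining P k i)ᶜ = ∑ j ∈ range i, k j := by
  rw [card_compl, card_remaining, Fintype.card_fin, Nat.sub_sub_self hk]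

theorem remaining_congr {P P' : ℕ → Fin m ≃ Fin m} (k : ℕ → ℕ) {i : ℕ}
    (h : ∀ j < i, P j = P' j) : remaining P k i = remaining P' k i := by
  induction i with
  | zero => rfl
  | succ i ih => rw [remaining, remaining, ih fun j hj => h j (by omega), h i (by omega)]

theorem extendProfile_val {n : ℕ} (Q : Fin n → Fin m ≃ Fin m) (i : Fin n) :
    extendProfile n Q i = Q i := by
  simp [extendProfile]

theorem remaining_extendProfile_update {n : ℕ} (Q : Fin n → Fin m ≃ Fin m) (k : ℕ → ℕ)
    (i : Fin n) (σ : Fin m ≃ Fin m) :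
    remaining (extendProfile n (Function.update Q i σ)) k i =
      remaining (extendProfile n Q) k i := by
  refine remaining_congr k fun j hj => ?_
  lift j to Fin n using hj.trans i.2
  rw [extendProfile_val, extendProfile_val, Function.update_of_ne (Fin.lt_def.2 hj).ne]

end Picking

section Ranks

variable {m : ℕ}

/-- The numbering of `Fin m` by `{1,…,m}`, matching the index convention of scoring vectors. -/
def oneBased (m : ℕ) : Fin m ↪ ℕ := Fin.valEmbedding.trans (addRightEmbedding 1)

/-- The 1-based rank of an item under the ranking `σ`, as an embedding so that sets of items can be
mapped to sets of ranks. -/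
def itemRank (σ : Fin m ≃ Fin m) : Fin m ↪ ℕ := σ.symm.toEmbedding.trans (oneBased m)

theorem map_oneBased_univ (m : ℕ) : univ.map (oneBased m) = Icc 1 m := by
  rw [oneBased, ← map_map, Fin.map_valEmbedding_univ, Nat.Iio_eq_range,
    ← Nat.Ico_zero_eq_range, map_add_right_Ico]
  rfl

theorem map_itemRank_univ (σ : Fin m ≃ Fin m) : univ.map (itemRank σ) = Icc 1 m := by
  rw [itemRank, ← map_map, map_univ_equiv, map_oneBased_univ]

theorem smallestK_map_itemRank (σ : Fin m ≃ Fin m) (S : Finset (Fin m)) (k : ℕ) :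
    smallestK (S.map (itemRank σ)) k = (topk σ S k).map (itemRank σ) := by
  simp [smallestK, topk, filter_map, itemRank, oneBased, Function.comp_def]

theorem expect_map_itemRank {M : Type*} [AddCommMonoid M] [Module ℚ≥0 M] (H : Finset ℕ → M)
    (T : Finset (Fin m)) :
    𝔼 σ : Fin m ≃ Fin m, H (T.map (itemRank σ)) = 𝔼 S ∈ (Icc 1 m).powersetCard #T, H S :=
  calc 𝔼 σ : Fin m ≃ Fin m, H (T.map (itemRank σ))
      = 𝔼 σ : Equiv.Perm (Fin m), H ((T.map σ.toEmbedding).map (oneBased m)) :=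
        Fintype.expect_equiv (Equiv.inv _) _ _ fun σ => by rw [map_map]; rfl
    _ = 𝔼 S ∈ univ.powersetCard #T, H (S.map (oneBased m)) :=
        expect_map_perm (fun S => H (S.map (oneBased m))) T
    _ = 𝔼 S ∈ (Icc 1 m).powersetCard #T, H S := by
        rw [← map_oneBased_univ, expect_powersetCard_map]

end Ranks

section Utility

/-- The total score of the `k` best ranks in `{1,…,m}` outside the set `T` of ranks already taken:
the quantity that `g` averages. -/
noncomputable def scoreOutside (m : ℕ) (s : ℕ → ℝ) (k : ℕ) (T : Finset ℕ) : ℝ :=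
  ∑ r ∈ smallestK (Icc 1 m \ T) k, s r

theorem g_one_eq_expect (m : ℕ) (s : ℕ → ℝ) (k t : ℕ) :
    g m s 1 k t = 𝔼 S ∈ (Icc 1 m).powersetCard t, scoreOutside m s k S :=
  (expect_eq_sum_div_card _ _).symm

theorem EUFI_eq_expect (n m : ℕ) (s : ℕ → ℝ) (k : ℕ → ℕ) (i : ℕ) :
    EUFI n m s k i = 𝔼 Q : Fin n → Fin m ≃ Fin m, util s (extendProfile n Q) k i :=
  (Fintype.expect_eq_sum_div_card _).symm

theorem util_eq_scoreOutside {m : ℕ} (s : ℕ → ℝ) (P : ℕ → Fin m ≃ Fin m) (k : ℕ → ℕ) (i : ℕ) :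
    util s P k i = scoreOutside m s (k i) ((remaining P k i)ᶜ.map (itemRank (P i))) := by
  rw [scoreOutside, ← map_itemRank_univ (P i), ← Finset.map_sdiff, ← compl_eq_univ_sdiff,
    compl_compl, smallestK_map_itemRank, sum_map]
  rfl

theorem util_extendProfile_update {n m : ℕ} (s : ℕ → ℝ) (Q : Fin n → Fin m ≃ Fin m)
    (k : ℕ → ℕ) (i : Fin n) (σ : Fin m ≃ Fin m) :
    util s (extendProfile n (Function.update Q i σ)) k i =
      scoreOutside m s (k i) ((remaining (extendProfile n Q) k i)ᶜ.map (itemRank σ)) := by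
  rw [util_eq_scoreOutside, remaining_extendProfile_update, extendProfile_val,
    Function.update_self]

theorem expect_util_extendProfile_update {n m : ℕ} (s : ℕ → ℝ) (Q : Fin n → Fin m ≃ Fin m)
    {k : ℕ → ℕ} (i : Fin n) (hk : ∑ j ∈ range i, k j ≤ m) :
    𝔼 σ, util s (extendProfile n (Function.update Q i σ)) k i =
      g m s 1 (k i) (∑ j ∈ range i, k j) := by
  simp only [util_extendProfile_update]
  rw [expect_map_itemRank, card_compl_remaining _ hk, g_one_eq_expect]

end Utility

theorem fi_expected_utility_eq_g_general (n m : ℕ) (s : ℕ → ℝ) (k : ℕ → ℕ) (i : Fin n)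
    (hk : ∑ j ∈ range i, k j ≤ m) :
    EUFI n m s k i = g m s 1 (k i) (∑ j ∈ range i, k j) :=
  calc EUFI n m s k i
      = 𝔼 Q : Fin n → Fin m ≃ Fin m, util s (extendProfile n Q) k i := EUFI_eq_expect n m s k i
    _ = 𝔼 Q : Fin n → Fin m ≃ Fin m, 𝔼 σ, util s (extendProfile n (Function.update Q i σ)) k i :=
        (expect_expect_update i _).symm
    _ = 𝔼 _Q : Fin n → Fin m ≃ Fin m, g m s 1 (k i) (∑ j ∈ range i, k j) :=
        expect_congr rfl fun Q _ => expect_util_extendProfile_update s Q i hk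
    _ = g m s 1 (k i) (∑ j ∈ range i, k j) := Fintype.expect_const _

/-- In the full independence model, the expected utility of agent `i` under the
non-interleaving picking sequence `k` equals the average, over all `c_i`-element subsets
`S` of `{1,…,m}`, of the sum of `s r` over the `k_i` smallest elements `r` of `{1,…,m} \ S`,
where `c_i = k_1 + ⋯ + k_{i-1}`.  In particular this expected utility depends only on
`k_i` and `c_i`. -/
theorem fi_expected_utility_eq_g
    (n m : ℕ) (hn : 0 < n) (hm : 0 < m) (s : ℕ → ℝ)
    (hmono : ∀ i j : ℕ, 1 ≤ i → i ≤ j → j ≤ m → s j ≤ s i)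
    (hnonneg : ∀ j : ℕ, 1 ≤ j → j ≤ m → 0 ≤ s j)
    (k : ℕ → ℕ) (hk : ∑ i ∈ Finset.range n, k i = m) :
    ∀ i < n, EUFI n m s k i = g m s 1 (k i) (∑ j ∈ Finset.range i, k j) := by
  intro i hi
  exact fi_expected_utility_eq_g_general n m s k ⟨i, hi⟩
    ((sum_le_sum_of_subset (range_mono hi.le)).trans hk.le)
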